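/- Full-transcript simulation using only the public evidence: let G be a group, g ∈ G an element of finite order n > 0, let c : ZMod n be the secret, and let e = g^(c.val) be the public evidence. Then the distribution of the real i = 1 transcript (s, r') = (g^(r.val), r + c), for r uniform on ZMod n, equals the distribution of the simulated transcript (g^(t.val) * e⁻¹, t), for t uniform on ZMod n. Hence a simulator knowing only the public evidence e (and not c) produces transcripts identically distributed to the real prover's, so the transcript reveals nothing about c beyond the evidence. -/

import Mathlib

theorem pmf_map_apply_of_injective {α β : Type*} (p : PMF α) {f : α → β}
    (hf : Function.Injective f) (a : α) :
    p.map f (f a) = p a := by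
  rw [PMF.map_apply, tsum_eq_single a fun a' ha => if_neg (hf.ne ha.symm), if_pos rfl]

theorem map_uniformOfFintype_equiv {α β : Type*} [Fintype α] [Nonempty α] [Fintype β] [Nonempty β]
    (f : α ≃ β) :
    (PMF.uniformOfFintype α).map f = PMF.uniformOfFintype β := by
  ext b
  obtain ⟨a, rfl⟩ := f.surjective b
  rw [pmf_map_apply_of_injective _ f.injective, PMF.uniformOfFintype_apply,
    PMF.uniformOfFintype_apply, Fintype.card_congr f]

/-- The character `a ↦ g ^ a.val` of `ZMod n`. Unlike `AddChar.zmodChar`, it does not ask the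
target to be commutative. -/
def powValAddChar {M : Type*} [Monoid M] {g : M} {n : ℕ} [NeZero n] (hg : g ^ n = 1) :
    AddChar (ZMod n) M where
  toFun a := g ^ a.val
  map_zero_eq_one' := by rw [ZMod.val_zero, pow_zero]
  map_add_eq_mul' a b := by rw [ZMod.val_add, ← pow_eq_pow_mod _ hg, pow_add]

/-- The substitution `t = r + c` preserves the uniform distribution and makes the two transcripts
agree for every single `r`. -/
theorem transcript_simulatable_general {A G : Type*} [AddGroup A] [Fintype A] [Group G]
    (ψ : AddChar A G) (c : A) :
    (PMF.uniformOfFintype A).map (fun r => (ψ r, r + c)) =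
      (PMF.uniformOfFintype A).map (fun t => (ψ t * (ψ c)⁻¹, t)) := by
  have transcripts_agree : (fun r => (ψ r, r + c)) =
      (fun t => (ψ t * (ψ c)⁻¹, t)) ∘ Equiv.addRight c := by
    funext r
    simp only [Function.comp_apply, Equiv.coe_addRight, AddChar.map_add_eq_mul,
      mul_inv_cancel_right]
  rw [transcripts_agree, ← PMF.map_comp, map_uniformOfFintype_equiv]

/-- Full-transcript simulation from the public evidence alone: if `g` has
finite order `n > 0`, secret `c : ZMod n`, and evidence `e = g^(c.val)`, then
the real `i = 1` transcript `(g^(r.val), r + c)` for uniform `r` is distributed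
identically to the simulated transcript `(g^(t.val) * e⁻¹, t)` for uniform `t`. -/
theorem transcript_simulatable {G : Type*} [Group G] (g : G) (n : ℕ) [NeZero n]
    (hord : orderOf g = n) (c : ZMod n) (e : G) (he : e = g ^ c.val) :
    (PMF.uniformOfFintype (ZMod n)).map
        (fun r => ((g ^ r.val, r + c) : G × ZMod n)) =
      (PMF.uniformOfFintype (ZMod n)).map
        (fun t => ((g ^ t.val * e⁻¹, t) : G × ZMod n)) := by
  subst he
  exact transcript_simulatable_general (powValAddChar (hord ▸ pow_orderOf_eq_one g)) c
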